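/- Let ψ = (φ₁,…,φₙ; σ) and ψ' = (φ'₁,…,φ'ₙ; σ') be morphisms ℤ^k → (ℤ^k)^n ⋊ Σ_n, and let f₁,…,fₙ, f'₁,…,f'ₙ : ℝ^k → ℝ^k be maps such that f_i(t+z) = f_{σ_z^{-1}(i)}(t) + φ_i(z) and f'_i(t+z) = f'_{(σ'_z)^{-1}(i)}(t) + φ'_i(z) for all i, all z ∈ ℤ^k and all t ∈ ℝ^k. Suppose there exist τ ∈ Σ_n and z₁,…,zₙ ∈ ℤ^k with f'_i = f_{τ^{-1}(i)} + z_i for all i, that the residues of f₁(0),…,fₙ(0) modulo ℤ^k are pairwise distinct, and that f_i(0) ≡ f'_i(0) mod ℤ^k for every i. Then σ_z = σ'_z for all z ∈ ℤ^k (hence S_i = S'_i for all i), and φ_i(z) = φ'_i(z) for all i and all z ∈ S_i. -/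

import Mathlib

/-!
Evaluating the covering relation `f' i = f (τ⁻¹ i) + w i` at `0` shows that `f i 0` and
`f (τ⁻¹ i) 0` are congruent modulo the lattice, so distinctness of the residues gives `τ = 1`
and `f' i = f i + w i`. Computing `f' i z` for a lattice point `z` through both equivariance
laws gives
`f ((σ z)⁻¹ i) 0 + φ i z + w i = f ((σ' z)⁻¹ i) 0 + w ((σ' z)⁻¹ i) + φ' i z`.
Modulo the lattice this forces `(σ z)⁻¹ i = (σ' z)⁻¹ i`; when `σ z` fixes `i`, the remaining
terms `f i 0` and `w i` cancel, leaving `φ i z = φ' i z`.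
-/

/-- The inclusion of the standard lattice `ℤ^k` into `ℝ^k`. -/
def coeVec {k : ℕ} (z : Fin k → ℤ) : Fin k → ℝ := fun j => (z j : ℝ)

theorem coeVec_add {k : ℕ} (a b : Fin k → ℤ) : coeVec (a + b) = coeVec a + coeVec b := by
  funext j
  simp [coeVec]

theorem coeVec_sub {k : ℕ} (a b : Fin k → ℤ) : coeVec (a - b) = coeVec a - coeVec b := by
  funext j
  simp [coeVec]

theorem coeVec_injective {k : ℕ} : Function.Injective (coeVec (k := k)) := by
  intro a b h
  funext j
  exact Int.cast_injective (congrFun h j)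

theorem stmt11 {k n : ℕ} (hk : 1 ≤ k) (hn : 1 ≤ n)
    (σ : (Fin k → ℤ) → Equiv.Perm (Fin n))
    (hσ : ∀ z₁ z₂ : Fin k → ℤ, σ (z₁ + z₂) = σ z₁ * σ z₂)
    (φ : Fin n → (Fin k → ℤ) → Fin k → ℤ)
    (hφ : ∀ (i : Fin n) (z₁ z₂ : Fin k → ℤ),
      φ i (z₁ + z₂) = φ i z₁ + φ ((σ z₁)⁻¹ i) z₂)
    (σ' : (Fin k → ℤ) → Equiv.Perm (Fin n))
    (hσ' : ∀ z₁ z₂ : Fin k → ℤ, σ' (z₁ + z₂) = σ' z₁ * σ' z₂)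
    (φ' : Fin n → (Fin k → ℤ) → Fin k → ℤ)
    (hφ' : ∀ (i : Fin n) (z₁ z₂ : Fin k → ℤ),
      φ' i (z₁ + z₂) = φ' i z₁ + φ' ((σ' z₁)⁻¹ i) z₂)
    (f f' : Fin n → (Fin k → ℝ) → Fin k → ℝ)
    (hf : ∀ (i : Fin n) (z : Fin k → ℤ) (t : Fin k → ℝ),
      f i (t + coeVec z) = f ((σ z)⁻¹ i) t + coeVec (φ i z))
    (hf' : ∀ (i : Fin n) (z : Fin k → ℤ) (t : Fin k → ℝ),
      f' i (t + coeVec z) = f' ((σ' z)⁻¹ i) t + coeVec (φ' i z))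
    (hcov : ∃ (τ : Equiv.Perm (Fin n)) (w : Fin n → Fin k → ℤ),
      ∀ i : Fin n, f' i = fun t => f (τ⁻¹ i) t + coeVec (w i))
    (hdist : ∀ i j : Fin n, i ≠ j → ¬ ∃ w : Fin k → ℤ, f i 0 - f j 0 = coeVec w)
    (hsame : ∀ i : Fin n, ∃ w : Fin k → ℤ, f i 0 - f' i 0 = coeVec w) :
    (∀ z : Fin k → ℤ, σ z = σ' z) ∧
    (∀ (i : Fin n) (z : Fin k → ℤ), σ z i = i → φ i z = φ' i z) := by
  obtain ⟨τ, w, hw⟩ := hcov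
  -- Distinct residues at `0` force equality of indices, so `τ` is the identity.
  have hinj : ∀ (i j : Fin n) (v : Fin k → ℤ), f i 0 - f j 0 = coeVec v → i = j := by
    intro i j v h
    by_contra hne
    exact hdist i j hne ⟨v, h⟩
  have hτ : ∀ i, τ⁻¹ i = i := by
    intro i
    obtain ⟨v, hv⟩ := hsame i
    refine (hinj i (τ⁻¹ i) (v + w i) ?_).symm
    rw [coeVec_add, ← hv]
    simp only [hw i]
    abel
  have hw' : ∀ i t, f' i t = f i t + coeVec (w i) := by
    intro i t
    simp only [hw i, hτ i]
  have key : ∀ i z, f ((σ z)⁻¹ i) 0 + coeVec (φ i z) + coeVec (w i)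
      = f ((σ' z)⁻¹ i) 0 + coeVec (w ((σ' z)⁻¹ i)) + coeVec (φ' i z) := by
    intro i z
    rw [← hf, ← hw', ← hw', hf']
  have hinv : ∀ i z, (σ z)⁻¹ i = (σ' z)⁻¹ i := by
    intro i z
    refine hinj _ _ (w ((σ' z)⁻¹ i) + φ' i z - φ i z - w i) ?_
    rw [coeVec_sub, coeVec_sub, coeVec_add, sub_eq_iff_eq_add]
    have h := eq_sub_of_add_eq (eq_sub_of_add_eq (key i z))
    rw [h]
    abel
  refine ⟨fun z => inv_injective (Equiv.ext fun i => hinv i z), fun i z hi => ?_⟩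
  have hi' : (σ z)⁻¹ i = i := Equiv.Perm.inv_eq_iff_eq.mpr hi.symm
  have h := key i z
  rw [← hinv, hi', add_right_comm] at h
  exact coeVec_injective (add_left_cancel h)
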